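/- Let G and H be connected simple graphs. Then q(G ∨ H) ≤ max{ 2, | |G| − |H| | }. -/

import Mathlib

open Matrix Filter

/-- `A ∈ S(G)`: real symmetric matrix whose off-diagonal zero pattern is given by `G`. -/
def inS {V : Type*} (G : SimpleGraph V) (A : Matrix V V ℝ) : Prop :=
  A.IsSymm ∧ ∀ i j : V, i ≠ j → (A i j ≠ 0 ↔ G.Adj i j)

/-- The spectrum of a matrix, as the multiset of roots of its characteristic polynomial. -/
noncomputable def specMultiset {V : Type*} [Fintype V] [DecidableEq V]
    (A : Matrix V V ℝ) : Multiset ℝ :=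
  A.charpoly.roots

/-- The number of distinct eigenvalues of a matrix. -/
noncomputable def qMat {V : Type*} [Fintype V] [DecidableEq V] (A : Matrix V V ℝ) : ℕ :=
  (specMultiset A).toFinset.card

/-- `q(G)`: the minimum number of distinct eigenvalues over matrices in `S(G)`. -/
noncomputable def qGraph {V : Type*} [Fintype V] [DecidableEq V] (G : SimpleGraph V) : ℕ :=
  sInf {q | ∃ A : Matrix V V ℝ, inS G A ∧ qMat A = q}

/-- The strong spectral property. -/
def HasSSP {V : Type*} [Fintype V] [DecidableEq V] (A : Matrix V V ℝ) : Prop :=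
  ∀ X : Matrix V V ℝ, X.IsSymm → A * X = X * A →
    Matrix.hadamard A X = 0 → Matrix.hadamard (1 : Matrix V V ℝ) X = 0 → X = 0

/-- Generic realisability of a multiset of eigenvalues for a graph. -/
def GenericallyRealisable {V : Type*} [Fintype V] [DecidableEq V]
    (G : SimpleGraph V) (σ : Multiset ℝ) : Prop :=
  ∀ Y : Finset (V → ℝ), (∀ y ∈ Y, y ≠ 0) →
    ∃ (d : V → ℝ) (U : Matrix V V ℝ),
      Multiset.map d Finset.univ.val = σ ∧ Uᵀ * U = 1 ∧
      inS G (U * Matrix.diagonal d * Uᵀ) ∧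
      ∀ y ∈ Y, ∀ i, U.mulVec y i ≠ 0

/-- The partial join `(G₁, X) ∨ G₂`: the disjoint union of `G₁` and `G₂` together with all
edges joining vertices of `X ⊆ V(G₁)` to vertices of `G₂`. -/
def partialJoin {α β : Type*} (G₁ : SimpleGraph α) (X : Set α) (G₂ : SimpleGraph β) :
    SimpleGraph (α ⊕ β) where
  Adj x y :=
    (∃ a b, G₁.Adj a b ∧ x = Sum.inl a ∧ y = Sum.inl b) ∨
    (∃ a b, G₂.Adj a b ∧ x = Sum.inr a ∧ y = Sum.inr b) ∨
    (∃ a ∈ X, ∃ b, x = Sum.inl a ∧ y = Sum.inr b) ∨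
    (∃ a ∈ X, ∃ b, x = Sum.inr b ∧ y = Sum.inl a)
  symm := by
    refine ⟨?_⟩
    rintro x y (⟨a, b, hab, rfl, rfl⟩ | ⟨a, b, hab, rfl, rfl⟩ | ⟨a, ha, b, rfl, rfl⟩ |
      ⟨a, ha, b, rfl, rfl⟩)
    · exact Or.inl ⟨b, a, hab.symm, rfl, rfl⟩
    · exact Or.inr (Or.inl ⟨b, a, hab.symm, rfl, rfl⟩)
    · exact Or.inr (Or.inr (Or.inr ⟨a, ha, b, rfl, rfl⟩))
    · exact Or.inr (Or.inr (Or.inl ⟨a, ha, b, rfl, rfl⟩))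
  loopless := by
    refine ⟨?_⟩
    rintro x (⟨a, b, hab, rfl, h⟩ | ⟨a, b, hab, rfl, h⟩ | ⟨a, ha, b, rfl, h⟩ | ⟨a, ha, b, rfl, h⟩)
    · cases h; exact hab.ne rfl
    · cases h; exact hab.ne rfl
    · exact (Sum.inl_ne_inr h).elim
    · exact (Sum.inr_ne_inl h).elim

/-- The join `G₁ ∨ G₂` of two graphs. -/
def graphJoin {α β : Type*} (G₁ : SimpleGraph α) (G₂ : SimpleGraph β) : SimpleGraph (α ⊕ β) :=
  partialJoin G₁ Set.univ G₂

/-- The disjoint union of a family of graphs. -/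
def sigmaGraph {ι : Type*} {α : ι → Type*} (G : ∀ i, SimpleGraph (α i)) :
    SimpleGraph (Σ i, α i) where
  Adj x y := ∃ (i : ι) (a b : α i), (G i).Adj a b ∧ x = ⟨i, a⟩ ∧ y = ⟨i, b⟩
  symm := by
    refine ⟨?_⟩
    rintro x y ⟨i, a, b, hab, rfl, rfl⟩
    exact ⟨i, b, a, hab.symm, rfl, rfl⟩
  loopless := by
    refine ⟨?_⟩
    rintro x ⟨i, a, b, hab, rfl, h⟩
    obtain rfl : a = b := by simpa using h
    exact hab.ne rfl

/-!
Let `G` be the graph with at least as many vertices. Being connected, it has a matrix in `S(G)` with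
simple spectrum `d` and an orthogonal eigenbasis `U` without zero entries. It is built by adding
one vertex at a time: when an isolated vertex is attached by edges of small weight, the implicit
function theorem restores the prescribed spectrum by a change of the diagonal only. The same
perturbation argument, started from a diagonal matrix, realises any simple spectrum `e` in `S(H)`
with an orthogonal eigenbasis `W` close to the identity.

Pick `l < m` and pair each vertex `k` of `H` with its own eigenvalue `d (f k)` strictly between `l`
and `m`. With `e k = l + m - d (f k)`, a coupling `σ` with `σ² = (d (f k) - l) * (m - d (f k))`
turns each pair into a `2 × 2` block with eigenvalues `l` and `m`. In the bases `U` and `W` the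
coupling becomes an off-diagonal block without zeros, so the result lies in `S(G ∨ H)`. Its
eigenvalues are `l`, `m` and the `|G| - |H|` unpaired values of `d`; when there are at least two of
the latter, `l` and `m` are chosen to be the extreme values of `d`, both left unpaired.
-/

section Isospectral

open scoped Topology

theorem apply_eq_zero_of_commute_diagonal {n R : Type*} [Fintype n] [DecidableEq n] [CommRing R]
    [NoZeroDivisors R] {d : n → R} (hd : Function.Injective d) {Z : Matrix n n R}
    (hZ : Commute Z (diagonal d)) {i j : n} (hij : i ≠ j) : Z i j = 0 := by
  have hij' := congrFun₂ hZ.eq i j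
  rw [mul_diagonal, diagonal_mul] at hij'
  have hprod : (d i - d j) * Z i j = 0 := by linear_combination -hij'
  exact (mul_eq_zero.mp hprod).resolve_left (sub_ne_zero.mpr (hd.ne hij))

theorem diag_transpose_mul_diagonal_mul {m n R : Type*} [Fintype m] [DecidableEq m]
    [CommSemiring R] (U : Matrix m n R) (b : m → R) :
    diag (Uᵀ * diagonal b * U) = b ᵥ* (U ⊙ U) := by
  ext j
  simp only [diag_apply, mul_apply (M := Uᵀ * diagonal b), mul_diagonal, transpose_apply, vecMul,
    dotProduct, hadamard_apply]
  exact Finset.sum_congr rfl fun i _ => by ring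

variable {V : Type*} [Fintype V] [DecidableEq V] {d : V → ℝ} {U₀ : Matrix V V ℝ}

theorem transpose_mul_self_eq_one_of_mul_diagonal_eq (hd : Function.Injective d)
    {U B : Matrix V V ℝ} (hB : B.IsSymm) (hUB : U * diagonal d = B * U)
    (hdiag : diag (Uᵀ * U) = 1) : Uᵀ * U = 1 := by
  have hcomm : Commute (Uᵀ * U) (diagonal d) := by
    have hUB' : diagonal d * Uᵀ = Uᵀ * B := by
      simpa only [transpose_mul, diagonal_transpose, hB.eq] using congrArg transpose hUB
    rw [Commute, SemiconjBy, mul_assoc, hUB, ← mul_assoc, ← hUB', mul_assoc]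
  ext i j
  obtain rfl | hij := eq_or_ne i j
  · simpa using congrFun hdiag i
  · rw [apply_eq_zero_of_commute_diagonal hd hcomm hij, one_apply_ne hij]

/-- The equations expressing that the columns of `U` are unit eigenvectors of `B + diagonal a`
for the eigenvalues `d`. The argument is `(B, U, a)`, the parameter `B` coming first so that the
implicit function theorem solves for `(U, a)`. -/
def eigenEquations (d : V → ℝ) (p : Matrix V V ℝ × Matrix V V ℝ × (V → ℝ)) :
    Matrix V V ℝ × (V → ℝ) :=
  (p.2.1 * diagonal d - (p.1 + diagonal p.2.2) * p.2.1, diag (p.2.1ᵀ * p.2.1))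

open scoped Matrix.Norms.Operator in
theorem exists_hasStrictFDerivAt_eigenEquations (d : V → ℝ) (B U : Matrix V V ℝ) (a : V → ℝ) :
    ∃ L : Matrix V V ℝ × Matrix V V ℝ × (V → ℝ) →L[ℝ] Matrix V V ℝ × (V → ℝ),
      HasStrictFDerivAt (eigenEquations d) L (B, U, a) ∧ ∀ Y b, L (0, Y, b) =
        (Y * diagonal d - ((B + diagonal a) * Y + diagonal b * U), diag (Uᵀ * Y + Yᵀ * U)) := by
  let diagonalL : (V → ℝ) →L[ℝ] Matrix V V ℝ :=
    (diagonalLinearMap V ℝ ℝ).toContinuousLinearMap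
  let diagL : Matrix V V ℝ →L[ℝ] (V → ℝ) := (diagLinearMap V ℝ ℝ).toContinuousLinearMap
  let transposeL : Matrix V V ℝ →L[ℝ] Matrix V V ℝ :=
    (transposeLinearEquiv V V ℝ ℝ).toLinearMap.toContinuousLinearMap
  let p₀ : Matrix V V ℝ × Matrix V V ℝ × (V → ℝ) := (B, U, a)
  have hB : HasStrictFDerivAt (fun p => p.1) (.fst ℝ _ _) p₀ := hasStrictFDerivAt_fst
  have hU := hasStrictFDerivAt_fst.comp p₀ (hasStrictFDerivAt_snd (𝕜 := ℝ))
  have ha := hasStrictFDerivAt_snd.comp p₀ (hasStrictFDerivAt_snd (𝕜 := ℝ))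
  have heigen := (hU.mul_const' (diagonal d)).sub
    ((hB.add (diagonalL.hasStrictFDerivAt.comp p₀ ha)).mul' hU)
  have hnorm := diagL.hasStrictFDerivAt.comp p₀ ((transposeL.hasStrictFDerivAt.comp p₀ hU).mul' hU)
  refine ⟨_, heigen.prodMk hnorm, fun Y b => ?_⟩
  change (Y * diagonal d - ((B + diagonal a) * Y + (0 + diagonal b) * U),
    diag (Uᵀ * Y + Yᵀ * U)) = _
  rw [zero_add]

/-- With `Z = U₀ᵀ Y`, the first equation reads `Z D - D Z = U₀ᵀ (diagonal b) U₀`. The left-hand side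
has zero diagonal, which forces `b = 0`; then `Z` commutes with `D`. -/
theorem eq_zero_of_linearized_eigenEquations (hd : Function.Injective d) (hU₀ : U₀ᵀ * U₀ = 1)
    (hdet : (U₀ ⊙ U₀).det ≠ 0) {Y : Matrix V V ℝ} {b : V → ℝ}
    (heigen : Y * diagonal d = U₀ * diagonal d * U₀ᵀ * Y + diagonal b * U₀)
    (hnorm : diag (U₀ᵀ * Y + Yᵀ * U₀) = 0) : Y = 0 ∧ b = 0 := by
  have hZ : U₀ᵀ * Y * diagonal d = diagonal d * (U₀ᵀ * Y) + U₀ᵀ * diagonal b * U₀ := by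
    rw [mul_assoc, heigen, mul_add]
    simp only [← mul_assoc, hU₀, one_mul]
  have hb : b = 0 := by
    refine eq_zero_of_vecMul_eq_zero hdet ?_
    rw [← diag_transpose_mul_diagonal_mul, ← sub_eq_of_eq_add' hZ]
    ext i
    simp only [diag_apply, Matrix.sub_apply, mul_diagonal, diagonal_mul, Pi.zero_apply]
    ring
  have hcomm : Commute (U₀ᵀ * Y) (diagonal d) := by
    rwa [hb, diagonal_zero', mul_zero, zero_mul, add_zero] at hZ
  have hZ_zero : U₀ᵀ * Y = 0 := by
    ext i j
    obtain rfl | hij := eq_or_ne i j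
    · have htranspose : Yᵀ * U₀ = (U₀ᵀ * Y)ᵀ := by simp
      have hsum := congrFun hnorm i
      rw [htranspose, diag_apply, Matrix.add_apply, transpose_apply, Pi.zero_apply] at hsum
      exact add_self_eq_zero.mp hsum
    · exact apply_eq_zero_of_commute_diagonal hd hcomm hij
  refine ⟨?_, hb⟩
  rw [← one_mul Y, ← mul_eq_one_comm.mp hU₀, mul_assoc, hZ_zero, mul_zero]

open scoped Matrix.Norms.Operator in
theorem eventually_exists_isospectral (hd : Function.Injective d) (hU₀ : U₀ᵀ * U₀ = 1)
    (hdet : (U₀ ⊙ U₀).det ≠ 0) {P : Matrix V V ℝ → Prop} (hP : ∀ᶠ U in 𝓝 U₀, P U) :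
    ∀ᶠ B in 𝓝 (U₀ * diagonal d * U₀ᵀ), B.IsSymm → ∃ (U : Matrix V V ℝ) (a : V → ℝ),
      Uᵀ * U = 1 ∧ U * diagonal d * Uᵀ = B + diagonal a ∧ P U := by
  obtain ⟨L, hL, hL_apply⟩ :=
    exists_hasStrictFDerivAt_eigenEquations d (U₀ * diagonal d * U₀ᵀ) U₀ 0
  have hinv : (L ∘L .inr ℝ _ _).IsInvertible := by
    have hinj : Function.Injective (L ∘L .inr ℝ _ _) := by
      refine (injective_iff_map_eq_zero _).mpr fun ⟨Y, b⟩ hYb => ?_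
      have hYb' := (hL_apply Y b).symm.trans hYb
      rw [diagonal_zero', add_zero, Prod.mk_eq_zero, sub_eq_zero] at hYb'
      exact Prod.ext_iff.mpr (eq_zero_of_linearized_eigenEquations hd hU₀ hdet hYb'.1 hYb'.2)
    exact ⟨(LinearEquiv.ofInjectiveEndo _ hinj).toContinuousLinearEquiv, rfl⟩
  have hbase : eigenEquations d (U₀ * diagonal d * U₀ᵀ, U₀, 0) = (0, 1) := by
    simp [eigenEquations, mul_assoc, hU₀]
  filter_upwards [hL.eventually_apply_implicitFunctionOfProdDomain hinv,
    (hL.tendsto_implicitFunctionOfProdDomain hinv).fst_nhds.eventually hP] with B hB hPU hBsymm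
  set ψ := hL.implicitFunctionOfProdDomain hinv
  rw [hbase] at hB
  have heigen : (ψ B).1 * diagonal d = (B + diagonal (ψ B).2) * (ψ B).1 :=
    sub_eq_zero.mp (congrArg Prod.fst hB)
  have horth := transpose_mul_self_eq_one_of_mul_diagonal_eq hd
    (hBsymm.add (isSymm_diagonal _)) heigen (congrArg Prod.snd hB)
  refine ⟨(ψ B).1, (ψ B).2, horth, ?_, hPU⟩
  rw [heigen, mul_assoc, mul_eq_one_comm.mp horth, mul_one]

theorem exists_isospectral_smul_add (hd : Function.Injective d) (hU₀ : U₀ᵀ * U₀ = 1)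
    (hdet : (U₀ ⊙ U₀).det ≠ 0) {R : Matrix V V ℝ} (hR : R.IsSymm) {P : Matrix V V ℝ → Prop}
    (hP : ∀ᶠ U in 𝓝 U₀, P U) :
    ∃ t : ℝ, t ≠ 0 ∧ ∃ (U : Matrix V V ℝ) (a : V → ℝ), Uᵀ * U = 1 ∧
      U * diagonal d * Uᵀ = U₀ * diagonal d * U₀ᵀ + t • R + diagonal a ∧ P U := by
  have hA₀ : (U₀ * diagonal d * U₀ᵀ).IsSymm := by simp [IsSymm, mul_assoc]
  have hlim : Tendsto (fun t : ℝ => U₀ * diagonal d * U₀ᵀ + t • R) (𝓝[≠] 0)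
      (𝓝 (U₀ * diagonal d * U₀ᵀ)) := by
    have hcont : Continuous fun t : ℝ => U₀ * diagonal d * U₀ᵀ + t • R := by fun_prop
    simpa using (hcont.tendsto 0).mono_left nhdsWithin_le_nhds
  obtain ⟨t, ht, ht_ne⟩ :=
    ((hlim.eventually (eventually_exists_isospectral hd hU₀ hdet hP)).and
      eventually_mem_nhdsWithin).exists
  exact ⟨t, ht_ne, ht (hA₀.add (hR.smul t))⟩

end Isospectral

section Graph

open scoped Topology

variable {V W : Type*} {G : SimpleGraph V} {H : SimpleGraph W}

theorem inS_submatrix (φ : G ≃g H) {A : Matrix W W ℝ} (hA : inS H A) :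
    inS G (A.submatrix φ φ) :=
  ⟨hA.1.submatrix φ, fun _ _ hij => (hA.2 _ _ (φ.injective.ne hij)).trans φ.map_adj_iff⟩

variable [Fintype V] [DecidableEq V] [Fintype W] [DecidableEq W]

theorem qMat_submatrix_equiv (e : V ≃ W) (A : Matrix W W ℝ) :
    qMat (A.submatrix e e) = qMat A :=
  congrArg (fun p => p.roots.toFinset.card) (charpoly_reindex e.symm A)

theorem qGraph_congr (φ : G ≃g H) : qGraph G = qGraph H := by
  refine congrArg sInf (Set.ext fun q => ⟨?_, ?_⟩)
  · rintro ⟨A, hA, rfl⟩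
    exact ⟨_, inS_submatrix φ.symm hA, qMat_submatrix_equiv φ.symm.toEquiv A⟩
  · rintro ⟨A, hA, rfl⟩
    exact ⟨_, inS_submatrix φ hA, qMat_submatrix_equiv φ.toEquiv A⟩

theorem qMat_conj {Q : Matrix V V ℝ} (hQ : Qᵀ * Q = 1) (M : Matrix V V ℝ) :
    qMat (Q * M * Qᵀ) = qMat M := by
  rw [qMat, specMultiset, charpoly_mul_comm, ← mul_assoc, hQ, one_mul, qMat, specMultiset]

theorem qMat_le_card {A : Matrix V V ℝ} {S : Finset ℝ}
    (hS : ∀ (x : ℝ) (v : V → ℝ), v ≠ 0 → A *ᵥ v = x • v → x ∈ S) : qMat A ≤ S.card := by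
  refine Finset.card_le_card fun x hx => ?_
  have hroot : (toLin' A).charpoly.IsRoot x := by
    rw [charpoly_toLin']
    exact Polynomial.isRoot_of_mem_roots (Multiset.mem_toFinset.mp hx)
  obtain ⟨v, hv⟩ :=
    ((Module.End.hasEigenvalue_iff_isRoot_charpoly _ x).mpr hroot).exists_hasEigenvector
  exact hS x v hv.2 hv.apply_eq_smul

theorem exists_inS_of_eventually_nhds_one (G : SimpleGraph V) {d : V → ℝ}
    (hd : Function.Injective d) {P : Matrix V V ℝ → Prop} (hP : ∀ᶠ U in 𝓝 1, P U) :
    ∃ U : Matrix V V ℝ, Uᵀ * U = 1 ∧ inS G (U * diagonal d * Uᵀ) ∧ P U := by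
  classical
  obtain ⟨t, ht, U, a, hU, hA, hPU⟩ := exists_isospectral_smul_add hd (U₀ := 1) (by simp)
    (by simp [one_hadamard]) (G.isSymm_adjMatrix (α := ℝ)) hP
  refine ⟨U, hU, ⟨by simp [IsSymm, mul_assoc], fun i j hij => ?_⟩, hPU⟩
  rw [hA]
  simp [hij, ht]

end Graph

section GenericChoice

open scoped Topology

theorem exists_support_eq_and_vecMul_ne_zero {m n K : Type*} [Fintype m] [Finite n] [Field K]
    [Infinite K] {M : Matrix m n K} (hM : ∀ i j, M i j ≠ 0) {S : Set m} (hS : S.Nonempty) :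
    ∃ c : m → K, c.support = S ∧ ∀ j, (c ᵥ* M) j ≠ 0 := by
  classical
  obtain ⟨i₀, hi₀⟩ := hS
  let D : Matrix m m K := diagonal (S.indicator 1)
  let N : Matrix m n K := D * M
  have hN (j : n) : N i₀ j ≠ 0 := by simp [N, D, hi₀, hM]
  let entry : m ⊕ n → Module.Dual K (m → K) :=
    Sum.elim (fun i => .proj i) (fun j => .proj j ∘ₗ N.vecMulLinear)
  obtain ⟨f, hf⟩ := Module.Dual.exists_forall_ne_zero_of_forall_exists entry (by
    rintro (i | j)
    · exact ⟨Pi.single i 1, by simp [entry]⟩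
    · exact ⟨Pi.single i₀ 1, by simp [entry, hN]⟩)
  refine ⟨f ᵥ* D, ?_, fun j => ?_⟩
  · have hfi (i : m) : f i ≠ 0 := hf (.inl i)
    ext i
    simp [D, vecMul_diagonal, hfi]
  · rw [vecMul_vecMul]
    exact hf (.inr j)

/-- Near the pole `d k` the sums are dominated by their `k`-th terms. -/
theorem exists_forall_sum_div_sub_ne_zero {m n : Type*} [Finite m] [Fintype n] {d : n → ℝ}
    (hd : Function.Injective d) {M : Matrix m n ℝ} {k : n} (hk : ∀ i, M i k ≠ 0) :
    ∃ x, (∀ l, d l ≠ x) ∧ ∀ i, ∑ l, M i l / (d l - x) ≠ 0 := by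
  classical
  have hx : ∀ᶠ x in 𝓝[≠] d k, ∀ l, d l ≠ x := by
    refine eventually_all.mpr fun l => ?_
    obtain rfl | hl := eq_or_ne l k
    · filter_upwards [self_mem_nhdsWithin] with x hx using Ne.symm hx
    · exact (eventually_ne_nhds (hd.ne hl).symm).filter_mono nhdsWithin_le_nhds |>.mono
        fun _ => Ne.symm
  have hsum (i : m) : ∀ᶠ x in 𝓝[≠] d k, ∑ l, M i l / (d l - x) ≠ 0 := by
    have hcont : ContinuousAt
        (fun x => M i k + (d k - x) * ∑ l ∈ Finset.univ.erase k, M i l / (d l - x)) (d k) := by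
      refine continuousAt_const.add ((continuousAt_const.sub continuousAt_id).mul ?_)
      refine tendsto_finsetSum _ fun l hl => continuousAt_const.div (by fun_prop) ?_
      exact sub_ne_zero.mpr (hd.ne (Finset.ne_of_mem_erase hl))
    have hlim := hcont.eventually_ne (y := 0) (by simpa using hk i)
    filter_upwards [hlim.filter_mono nhdsWithin_le_nhds, hx] with x hx_ne hxd hzero
    refine hx_ne ?_
    rw [← Finset.add_sum_erase _ _ (Finset.mem_univ k)] at hzero
    have hk_ne : d k - x ≠ 0 := sub_ne_zero.mpr (hxd k)
    linear_combination (d k - x) * hzero - mul_div_cancel₀ (M i k) hk_ne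
  exact (hx.and (eventually_all.mpr hsum)).exists

end GenericChoice

section GenericEigenbasis

open scoped Topology

/-- An orthogonal matrix `U` without zero entries whose columns are eigenvectors of a matrix in
`S(G)` with simple spectrum `d`. The nondegeneracy of `U ⊙ U` is carried along because
`eventually_exists_isospectral` needs it. -/
structure IsGenericEigenbasis {V : Type*} [Fintype V] [DecidableEq V] (G : SimpleGraph V)
    (d : V → ℝ) (U : Matrix V V ℝ) : Prop where
  injective : Function.Injective d
  transpose_mul_self : Uᵀ * U = 1
  inS_conj : inS G (U * diagonal d * Uᵀ)
  apply_ne_zero : ∀ i j, U i j ≠ 0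
  det_hadamard_ne_zero : (U ⊙ U).det ≠ 0

theorem IsGenericEigenbasis.submatrix {V W : Type*} [Fintype V] [DecidableEq V] [Fintype W]
    [DecidableEq W] {G : SimpleGraph V} {H : SimpleGraph W} {d : W → ℝ} {U : Matrix W W ℝ}
    (h : IsGenericEigenbasis H d U) (φ : G ≃g H) :
    IsGenericEigenbasis G (d ∘ φ) (U.submatrix φ φ) where
  injective := h.injective.comp φ.injective
  transpose_mul_self := by
    rw [transpose_submatrix, ← submatrix_mul _ _ φ φ φ φ.bijective, h.transpose_mul_self]
    exact submatrix_one_equiv φ.toEquiv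
  inS_conj := by
    have hdiag : diagonal (d ∘ φ) = (diagonal d).submatrix φ φ :=
      (submatrix_diagonal_equiv d φ.toEquiv).symm
    rw [hdiag, transpose_submatrix, ← submatrix_mul _ _ φ φ φ φ.bijective,
      ← submatrix_mul _ _ φ φ φ φ.bijective]
    exact inS_submatrix φ h.inS_conj
  apply_ne_zero _ _ := h.apply_ne_zero _ _
  det_hadamard_ne_zero := by
    rw [← submatrix_hadamard]
    exact (det_submatrix_equiv_self φ.toEquiv _).trans_ne h.det_hadamard_ne_zero

variable {V : Type*} [Fintype V] [DecidableEq V] {d : V ⊕ Unit → ℝ} {c : V → ℝ}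
  {U : Matrix (V ⊕ Unit) (V ⊕ Unit) ℝ}

/-- The last row of an orthogonal matrix `U`, up to the factor `t`, as determined by the eigenvector
equations of `A = U * diagonal d * Uᵀ` when the last row of `A` is `t • c` off the diagonal. -/
noncomputable def borderRow (d : V ⊕ Unit → ℝ) (c : V → ℝ)
    (U : Matrix (V ⊕ Unit) (V ⊕ Unit) ℝ) (j : V) : ℝ :=
  (c ᵥ* U.toBlocks₁₁) j / (d (.inl j) - (U * diagonal d * Uᵀ) (.inr ()) (.inr ()))

theorem apply_inr_inl_eq_mul_borderRow (hU : Uᵀ * U = 1) {t : ℝ}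
    (hA : ∀ u, (U * diagonal d * Uᵀ) (.inr ()) (.inl u) = t * c u) {j : V}
    (hj : borderRow d c U j ≠ 0) : U (.inr ()) (.inl j) = t * borderRow d c U j := by
  have heigen : U * diagonal d * Uᵀ * U = U * diagonal d := by rw [mul_assoc, hU, mul_one]
  have hrow := congrFun₂ heigen (.inr ()) (.inl j)
  rw [mul_diagonal, mul_apply, Fintype.sum_sum_type, Fintype.sum_unique (ι := Unit)] at hrow
  simp only [hA, mul_assoc t, ← Finset.mul_sum] at hrow
  rw [borderRow, ← mul_div_assoc, eq_div_iff (div_ne_zero_iff.mp hj).2]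
  change t * (c ᵥ* U.toBlocks₁₁) j + _ = _ at hrow
  linear_combination -hrow

/-- The open conditions on `U` under which adding a vertex, joined to the others with weights
`t • c`, keeps all entries of the eigenbasis nonzero. -/
structure IsBorderGeneric (d : V ⊕ Unit → ℝ) (c : V → ℝ)
    (U : Matrix (V ⊕ Unit) (V ⊕ Unit) ℝ) : Prop where
  inl_inl_ne_zero : ∀ i j, U (.inl i) (.inl j) ≠ 0
  inr_inr_ne_zero : U (.inr ()) (.inr ()) ≠ 0
  borderRow_ne_zero : ∀ j, borderRow d c U j ≠ 0
  mulVec_borderRow_ne_zero : ∀ i, (U.toBlocks₁₁ *ᵥ borderRow d c U) i ≠ 0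
  det_hadamard_ne_zero : (U ⊙ U).det ≠ 0

/-- The last column is controlled by the last row through the orthogonality of the rows of `U`. -/
theorem IsBorderGeneric.apply_ne_zero (h : IsBorderGeneric d c U) (hU : Uᵀ * U = 1) {t : ℝ}
    (ht : t ≠ 0) (hA : ∀ u, (U * diagonal d * Uᵀ) (.inr ()) (.inl u) = t * c u) :
    ∀ i j, U i j ≠ 0 := by
  have hrow (j : V) : U (.inr ()) (.inl j) = t * borderRow d c U j :=
    apply_inr_inl_eq_mul_borderRow hU hA (h.borderRow_ne_zero j)
  rintro (i | ⟨⟩) (j | ⟨⟩)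
  · exact h.inl_inl_ne_zero i j
  · intro hzero
    have hrows : U * Uᵀ = 1 := mul_eq_one_comm.mp hU
    have horth := congrFun₂ hrows (.inl i) (.inr ())
    rw [one_apply_ne Sum.inl_ne_inr, mul_apply, Fintype.sum_sum_type,
      Fintype.sum_unique (ι := Unit)] at horth
    simp only [transpose_apply, PUnit.default_eq_unit, hzero, zero_mul, add_zero, hrow,
      mul_left_comm _ t, ← Finset.mul_sum] at horth
    exact mul_ne_zero ht (h.mulVec_borderRow_ne_zero i) horth
  · rw [hrow]
    exact mul_ne_zero ht (h.borderRow_ne_zero j)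
  · exact h.inr_inr_ne_zero

theorem IsBorderGeneric.eventually (h : IsBorderGeneric d c U) :
    ∀ᶠ U' in 𝓝 U, IsBorderGeneric d c U' := by
  have hentry (i j) : Continuous fun U' : Matrix (V ⊕ Unit) (V ⊕ Unit) ℝ => U' i j :=
    continuous_apply_apply i j
  have hblock : Continuous fun U' : Matrix (V ⊕ Unit) (V ⊕ Unit) ℝ => U'.toBlocks₁₁ :=
    continuous_matrix fun i j => hentry (.inl i) (.inl j)
  have hborder (j) : ContinuousAt (fun U' => borderRow d c U' j) U := by
    refine ContinuousAt.div ?_ ?_ (div_ne_zero_iff.mp (h.borderRow_ne_zero j)).2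
    · exact ((continuous_apply j).comp (continuous_const.matrix_vecMul hblock)).continuousAt
    · have hconj : Continuous fun U' : Matrix (V ⊕ Unit) (V ⊕ Unit) ℝ =>
          U' * diagonal d * U'ᵀ := by fun_prop
      exact (continuous_const.sub (hconj.matrix_elem _ _)).continuousAt
  have hcol (i) : ContinuousAt (fun U' => (U'.toBlocks₁₁ *ᵥ borderRow d c U') i) U :=
    tendsto_finsetSum _ fun j _ => (hentry _ _).continuousAt.mul (hborder j)
  have hdet : Continuous fun U' : Matrix (V ⊕ Unit) (V ⊕ Unit) ℝ => (U' ⊙ U').det :=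
    (continuous_matrix fun i j => (hentry i j).mul (hentry i j)).matrix_det
  filter_upwards [
    eventually_all.mpr fun i => eventually_all.mpr fun j =>
      (hentry _ _).continuousAt.eventually_ne (h.inl_inl_ne_zero i j),
    (hentry _ _).continuousAt.eventually_ne h.inr_inr_ne_zero,
    eventually_all.mpr fun j => (hborder j).eventually_ne (h.borderRow_ne_zero j),
    eventually_all.mpr fun i => (hcol i).eventually_ne (h.mulVec_borderRow_ne_zero i),
    hdet.continuousAt.eventually_ne h.det_hadamard_ne_zero] with U' h₁ h₂ h₃ h₄ h₅
  exact ⟨h₁, h₂, h₃, h₄, h₅⟩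

theorem fromBlocks_one_conj_diagonal (U : Matrix V V ℝ) (d : V → ℝ) (x : ℝ) :
    fromBlocks U 0 0 (1 : Matrix Unit Unit ℝ) * diagonal (Sum.elim d fun _ => x) *
      (fromBlocks U 0 0 1)ᵀ = fromBlocks (U * diagonal d * Uᵀ) 0 0 (diagonal fun _ => x) := by
  rw [← fromBlocks_diagonal, fromBlocks_transpose, fromBlocks_multiply, fromBlocks_multiply]
  simp

theorem isBorderGeneric_fromBlocks_one {d : V → ℝ} {U : Matrix V V ℝ} {x : ℝ}
    (hU : ∀ i j, U i j ≠ 0) (hdet : (U ⊙ U).det ≠ 0) (hc : ∀ j, (c ᵥ* U) j ≠ 0)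
    (hx : ∀ j, d j ≠ x) (hsum : ∀ i, ∑ j, U i j * (c ᵥ* U) j / (d j - x) ≠ 0) :
    IsBorderGeneric (Sum.elim d fun _ => x) c (fromBlocks U 0 0 1) := by
  have hborder : borderRow (Sum.elim d fun _ => x) c (fromBlocks U 0 0 1) =
      fun j => (c ᵥ* U) j / (d j - x) := by
    ext j
    rw [borderRow, fromBlocks_one_conj_diagonal]
    simp
  refine ⟨hU, by simp, fun j => ?_, fun i => ?_, ?_⟩
  · rw [hborder]
    exact div_ne_zero (hc j) (sub_ne_zero.mpr (hx j))
  · rw [hborder, toBlocks_fromBlocks₁₁]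
    simpa only [mulVec, dotProduct, mul_div_assoc] using hsum i
  · have hblocks : fromBlocks U 0 0 (1 : Matrix Unit Unit ℝ) ⊙ fromBlocks U 0 0 1 =
        fromBlocks (U ⊙ U) 0 0 1 := by
      ext (i | i) (j | j) <;> simp
    simpa [hblocks] using hdet

theorem inS_border {V : Type*} [DecidableEq V] {c : V → ℝ} {G : SimpleGraph (V ⊕ Unit)}
    {A : Matrix V V ℝ}
    (hA : inS (G.comap Sum.inl) A) (hc : ∀ u, c u ≠ 0 ↔ G.Adj (.inl u) (.inr ())) {t : ℝ}
    (ht : t ≠ 0) (b : Unit → ℝ) (a : V ⊕ Unit → ℝ) :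
    inS G (fromBlocks A 0 0 (diagonal b) +
      t • fromBlocks 0 (replicateCol Unit c) (replicateRow Unit c) 0 + diagonal a) := by
  refine ⟨?_, ?_⟩
  · have hblock := IsSymm.fromBlocks hA.1 transpose_zero (isSymm_diagonal b)
    have hborder := IsSymm.fromBlocks (isSymm_zero (n := V))
      (transpose_replicateCol (ι := Unit) c) isSymm_zero
    exact (hblock.add (hborder.smul t)).add (isSymm_diagonal a)
  · rintro (i | ⟨⟩) (j | ⟨⟩) hij
    · simpa [hij] using hA.2 i j (ne_of_apply_ne _ hij)
    · simpa [ht] using hc i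
    · simpa [ht, G.adj_comm] using hc j
    · exact absurd rfl hij

theorem exists_isGenericEigenbasis_of_comap_inl {G : SimpleGraph (V ⊕ Unit)} {d' : V → ℝ}
    {U' : Matrix V V ℝ} (h : IsGenericEigenbasis (G.comap Sum.inl) d' U') {u₀ : V}
    (hu₀ : G.Adj (.inl u₀) (.inr ())) : ∃ d U, IsGenericEigenbasis G d U := by
  obtain ⟨c, hc, hcU⟩ := exists_support_eq_and_vecMul_ne_zero h.apply_ne_zero
    (S := {u | G.Adj (.inl u) (.inr ())}) ⟨u₀, hu₀⟩
  obtain ⟨x, hxd, hx⟩ := exists_forall_sum_div_sub_ne_zero h.injective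
    (M := of fun i j => U' i j * (c ᵥ* U') j) (k := u₀)
    fun i => mul_ne_zero (h.apply_ne_zero i u₀) (hcU u₀)
  have hd : Function.Injective (Sum.elim d' fun _ : Unit => x) :=
    h.injective.sumElim (Function.injective_of_subsingleton _) fun j _ => hxd j
  have hU₀ : (fromBlocks U' 0 0 (1 : Matrix Unit Unit ℝ))ᵀ * fromBlocks U' 0 0 1 = 1 := by
    simp [fromBlocks_transpose, fromBlocks_multiply, h.transpose_mul_self]
  have hgen := isBorderGeneric_fromBlocks_one h.apply_ne_zero h.det_hadamard_ne_zero hcU hxd hx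
  have hR : (fromBlocks 0 (replicateCol Unit c) (replicateRow Unit c) 0).IsSymm :=
    IsSymm.fromBlocks isSymm_zero (transpose_replicateCol c) isSymm_zero
  obtain ⟨t, ht, U, a, hU, hA, hUgen⟩ :=
    exists_isospectral_smul_add hd hU₀ hgen.det_hadamard_ne_zero hR hgen.eventually
  rw [fromBlocks_one_conj_diagonal] at hA
  refine ⟨_, U, hd, hU, ?_, hUgen.apply_ne_zero hU ht fun u => ?_, hUgen.det_hadamard_ne_zero⟩
  · rw [hA]
    exact inS_border h.inS_conj (fun u => Set.ext_iff.mp hc u) ht _ a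
  · simp [hA]

theorem exists_isGenericEigenbasis_of_connected {G : SimpleGraph V} (hG : G.Connected) :
    ∃ d U, IsGenericEigenbasis G d U := by
  classical
  induction hn : Fintype.card V using Nat.strong_induction_on generalizing V with
  | h n ih =>
  obtain hV | hV := subsingleton_or_nontrivial V
  · refine ⟨0, 1, Function.injective_of_subsingleton _, by simp, ⟨by simp [IsSymm], ?_⟩, ?_, ?_⟩
    · exact fun i j hij => absurd (Subsingleton.elim i j) hij
    · intro i j
      rw [Subsingleton.elim i j, one_apply_eq]
      exact one_ne_zero
    · simp [one_hadamard]
  · obtain ⟨v, hv⟩ := hG.exists_connected_induce_compl_singleton_of_finite_nontrivial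
    obtain ⟨w, hw⟩ := hG.preconnected.exists_adj_of_nontrivial v
    let e : {u // u ≠ v} ⊕ Unit ≃ V :=
      (Equiv.optionEquivSumPUnit _).symm.trans (Equiv.optionSubtypeNe v)
    have hcomap : (G.comap e).comap Sum.inl = G.induce {v}ᶜ := by
      ext a b
      simp only [SimpleGraph.comap_adj, e, Equiv.trans_apply]
      rfl
    have hcard : Fintype.card {u // u ≠ v} < n := by
      rw [← hn]
      exact Fintype.card_subtype_lt (not_not.mpr rfl)
    obtain ⟨d', U', h'⟩ := ih _ hcard (G := (G.comap e).comap Sum.inl) (by rwa [hcomap]) rfl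
    obtain ⟨d, U, h⟩ := exists_isGenericEigenbasis_of_comap_inl h' (u₀ := ⟨w, hw.ne'⟩)
      (by simpa [e] using hw.symm)
    exact ⟨_, _, h.submatrix (SimpleGraph.Iso.comap e G).symm⟩

end GenericEigenbasis

section CoupledMatrix

variable {α β : Type*} [DecidableEq α]

/-- The weights `√((dᵢ - l)(m - dᵢ))` placed at the entries `(f k, k)`. -/
noncomputable def coupling (d : α → ℝ) (f : β → α) (l m : ℝ) : Matrix α β ℝ :=
  (diagonal fun i => √((d i - l) * (m - d i))).submatrix id f

/-- The matrix that is, up to a permutation, the direct sum of the blocks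
`!![dᵢ, σ; σ, l + m - dᵢ]` for `i = f k`, where `σ = √((dᵢ - l)(m - dᵢ))` makes the block have
trace `l + m` and determinant `l * m`, and of the `1 × 1` blocks `dᵢ` for `i` outside the range
of `f`. -/
noncomputable def coupledMatrix [DecidableEq β] (d : α → ℝ) (f : β → α) (l m : ℝ) :
    Matrix (α ⊕ β) (α ⊕ β) ℝ :=
  fromBlocks (diagonal d) (coupling d f l m) (coupling d f l m)ᵀ
    (diagonal fun k => l + m - d (f k))

theorem mul_coupling_apply [Fintype α] (U : Matrix α α ℝ) (d : α → ℝ) (f : β → α) (l m : ℝ)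
    (i : α) (k : β) :
    (U * coupling d f l m) i k = U i (f k) * √((d (f k) - l) * (m - d (f k))) := by
  simp [mul_apply, coupling, diagonal_apply]

variable [Fintype α] [Fintype β] [DecidableEq β] {d : α → ℝ} {f : β → α} {l m : ℝ}

theorem coupledMatrix_mulVec_inl (z : α ⊕ β → ℝ) (i : α) :
    (coupledMatrix d f l m *ᵥ z) (.inl i) =
      d i * z (.inl i) + ∑ k, coupling d f l m i k * z (.inr k) := by
  rw [coupledMatrix, fromBlocks_mulVec, Sum.elim_inl, Pi.add_apply, mulVec_diagonal]
  rfl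

theorem coupledMatrix_mulVec_inl_of_notMem_range (z : α ⊕ β → ℝ) {i : α} (hi : i ∉ Set.range f) :
    (coupledMatrix d f l m *ᵥ z) (.inl i) = d i * z (.inl i) := by
  have hne (k : β) : i ≠ f k := fun h => hi ⟨k, h.symm⟩
  simp [coupledMatrix_mulVec_inl, coupling, hne]

theorem coupledMatrix_mulVec_inl_apply (hf : Function.Injective f) (z : α ⊕ β → ℝ) (k : β) :
    (coupledMatrix d f l m *ᵥ z) (.inl (f k)) =
      d (f k) * z (.inl (f k)) + √((d (f k) - l) * (m - d (f k))) * z (.inr k) := by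
  simp [coupledMatrix_mulVec_inl, coupling, diagonal_apply, hf.eq_iff]

theorem coupledMatrix_mulVec_inr (z : α ⊕ β → ℝ) (k : β) :
    (coupledMatrix d f l m *ᵥ z) (.inr k) =
      √((d (f k) - l) * (m - d (f k))) * z (.inl (f k)) + (l + m - d (f k)) * z (.inr k) := by
  rw [coupledMatrix, fromBlocks_mulVec, Sum.elim_inr, Pi.add_apply, mulVec_diagonal]
  simp [coupling, mulVec, dotProduct, diagonal_apply]

theorem eq_or_eq_of_block_eigenvector {K : Type*} [Field K] {a l m s u v x : K}
    (hs : s * s = (a - l) * (m - a)) (hu : a * u + s * v = x * u)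
    (hv : s * u + (l + m - a) * v = x * v) (huv : u ≠ 0 ∨ v ≠ 0) : x = l ∨ x = m := by
  have hu₀ : (x - l) * (x - m) * u = 0 := by
    linear_combination (l + m - a - x) * hu - s * hv + u * hs
  have hv₀ : (x - l) * (x - m) * v = 0 := by
    linear_combination (a - x) * hv - s * hu + v * hs
  have hroot : (x - l) * (x - m) = 0 :=
    huv.elim (mul_eq_zero.mp hu₀).resolve_right (mul_eq_zero.mp hv₀).resolve_right
  exact (mul_eq_zero.mp hroot).imp sub_eq_zero.mp sub_eq_zero.mp

theorem eq_of_coupledMatrix_mulVec_eq_smul (hf : Function.Injective f)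
    (hd : ∀ k, 0 ≤ (d (f k) - l) * (m - d (f k))) {x : ℝ} {z : α ⊕ β → ℝ} (hz : z ≠ 0)
    (heigen : coupledMatrix d f l m *ᵥ z = x • z) :
    x = l ∨ x = m ∨ ∃ i ∉ Set.range f, x = d i := by
  have hblock (k : β) (hk : z (.inl (f k)) ≠ 0 ∨ z (.inr k) ≠ 0) : x = l ∨ x = m := by
    refine eq_or_eq_of_block_eigenvector (Real.mul_self_sqrt (hd k)) ?_ ?_ hk
    · rw [← coupledMatrix_mulVec_inl_apply hf, heigen, Pi.smul_apply, smul_eq_mul]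
    · rw [← coupledMatrix_mulVec_inr, heigen, Pi.smul_apply, smul_eq_mul]
  obtain ⟨i | k, hne⟩ := Function.ne_iff.mp hz
  · by_cases hi : i ∈ Set.range f
    · obtain ⟨k, rfl⟩ := hi
      exact (hblock k (.inl hne)).imp_right .inl
    · refine .inr (.inr ⟨i, hi, mul_right_cancel₀ hne ?_⟩)
      rw [← coupledMatrix_mulVec_inl_of_notMem_range z hi, heigen, Pi.smul_apply, smul_eq_mul]
  · exact (hblock k (.inr hne)).imp_right .inl

theorem fromBlocks_conj_coupledMatrix (U : Matrix α α ℝ) (W : Matrix β β ℝ) :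
    fromBlocks U 0 0 W * coupledMatrix d f l m * (fromBlocks U 0 0 W)ᵀ =
      fromBlocks (U * diagonal d * Uᵀ) (U * coupling d f l m * Wᵀ)
        (U * coupling d f l m * Wᵀ)ᵀ (W * diagonal (fun k => l + m - d (f k)) * Wᵀ) := by
  simp [coupledMatrix, fromBlocks_transpose, fromBlocks_multiply, Matrix.mul_assoc]

end CoupledMatrix

section Selection

variable {α β : Type*} [Fintype α] [Nonempty α] {d : α → ℝ}

/-- For `k ≥ 2` both bounds are taken among the values of `d` on `X`, for `k = 1` one of them. -/
theorem exists_card_eq_and_forall_notMem_between (hd : Function.Injective d) {k : ℕ}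
    (hk : k ≤ Fintype.card α) :
    ∃ (X : Finset α) (l m : ℝ), X.card = k ∧ (∀ i ∉ X, l < d i ∧ d i < m) ∧
      ({l, m} ∪ X.image d).card ≤ max 2 k := by
  classical
  obtain ⟨i₀, hmin⟩ := Finite.exists_min d
  obtain ⟨i₁, hmax⟩ := Finite.exists_max d
  have lt_of_notMem {X : Finset α} (hX : i₀ ∈ X) {i : α} (hi : i ∉ X) : d i₀ < d i :=
    (hmin i).lt_of_ne (hd.ne (ne_of_mem_of_not_mem hX hi))
  obtain rfl | rfl | hk₂ : k = 0 ∨ k = 1 ∨ 2 ≤ k := by lia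
  · refine ⟨∅, d i₀ - 1, d i₁ + 1, rfl, fun i _ => ⟨?_, ?_⟩, ?_⟩
    · linarith [hmin i]
    · linarith [hmax i]
    · simpa using Finset.card_le_two
  · refine ⟨{i₀}, d i₀, d i₁ + 1, rfl, fun i hi => ⟨?_, ?_⟩, ?_⟩
    · exact lt_of_notMem (Finset.mem_singleton_self i₀) hi
    · linarith [hmax i]
    · rw [Finset.image_singleton, Finset.union_eq_left.mpr (by simp)]
      exact Finset.card_le_two.trans (le_max_left _ _)
  · obtain ⟨X, hX, rfl⟩ := Finset.exists_superset_card_eq (s := {i₀, i₁})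
      (Finset.card_le_two.trans hk₂) hk
    have hi₀ : i₀ ∈ X := hX (by simp)
    have hi₁ : i₁ ∈ X := hX (by simp)
    refine ⟨X, d i₀, d i₁, rfl, fun i hi => ⟨lt_of_notMem hi₀ hi, ?_⟩, ?_⟩
    · exact (hmax i).lt_of_ne (hd.ne (ne_of_mem_of_not_mem hi₁ hi).symm)
    · have hsub : {d i₀, d i₁} ⊆ X.image d := by
        rw [← Finset.image_singleton, ← Finset.image_insert]
        exact Finset.image_subset_image hX
      rw [Finset.union_eq_right.mpr hsub]
      exact Finset.card_image_le.trans (le_max_right _ _)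

theorem exists_injective_and_forall_between [DecidableEq α] [Fintype β] (hd : Function.Injective d)
    (hcard : Fintype.card β ≤ Fintype.card α) :
    ∃ (f : β → α) (l m : ℝ), Function.Injective f ∧ (∀ k, l < d (f k) ∧ d (f k) < m) ∧
      ({l, m} ∪ (Finset.univ.image f)ᶜ.image d).card ≤
        max 2 (Fintype.card α - Fintype.card β) := by
  obtain ⟨X, l, m, hX, hbetween, hS⟩ := exists_card_eq_and_forall_notMem_between hd
    (Nat.sub_le (Fintype.card α) (Fintype.card β))
  let e : β ≃ {i // i ∉ X} := Fintype.equivOfCardEq (by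
    rw [Fintype.card_subtype_compl, Fintype.card_coe, hX]
    lia)
  have himage : Finset.univ.image (fun k => (e k : α)) = Xᶜ := by
    ext i
    simp [← e.surjective.exists (p := fun j => (j : α) = i)]
  refine ⟨fun k => e k, l, m, Subtype.val_injective.comp e.injective, fun k => ?_, ?_⟩
  · exact hbetween _ (e k).2
  · rwa [himage, compl_compl]

end Selection

section Join

variable {α β : Type*} {G : SimpleGraph α} {H : SimpleGraph β}

@[simp]
theorem graphJoin_adj_inl_inl {a b : α} :
    (graphJoin G H).Adj (.inl a) (.inl b) ↔ G.Adj a b := by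
  simp [graphJoin, partialJoin]

@[simp]
theorem graphJoin_adj_inr_inr {a b : β} :
    (graphJoin G H).Adj (.inr a) (.inr b) ↔ H.Adj a b := by
  simp [graphJoin, partialJoin]

@[simp]
theorem graphJoin_adj_inl_inr {a : α} {b : β} : (graphJoin G H).Adj (.inl a) (.inr b) := by
  simp [graphJoin, partialJoin]

@[simp]
theorem graphJoin_adj_inr_inl {a : α} {b : β} : (graphJoin G H).Adj (.inr b) (.inl a) :=
  graphJoin_adj_inl_inr.symm

theorem inS_fromBlocks_graphJoin {A : Matrix α α ℝ} {B : Matrix α β ℝ} {C : Matrix β β ℝ}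
    (hA : inS G A) (hB : ∀ i j, B i j ≠ 0) (hC : inS H C) :
    inS (graphJoin G H) (fromBlocks A B Bᵀ C) := by
  refine ⟨IsSymm.fromBlocks hA.1 rfl hC.1, ?_⟩
  rintro (i | i) (j | j) hij
  · simpa using hA.2 i j (ne_of_apply_ne _ hij)
  · simpa using hB i j
  · simpa using hB j i
  · simpa using hC.2 i j (ne_of_apply_ne _ hij)

variable [Fintype α] [DecidableEq α] [Fintype β] [DecidableEq β]

theorem qGraph_graphJoin_comm (G : SimpleGraph α) (H : SimpleGraph β) :
    qGraph (graphJoin G H) = qGraph (graphJoin H G) :=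
  qGraph_congr
    { toEquiv := Equiv.sumComm α β
      map_rel_iff' := by rintro (a | a) (b | b) <;> simp }

theorem qGraph_graphJoin_le (hG : G.Connected) (H : SimpleGraph β)
    (hcard : Fintype.card β ≤ Fintype.card α) :
    qGraph (graphJoin G H) ≤ max 2 (Fintype.card α - Fintype.card β) := by
  have := hG.nonempty
  obtain ⟨d, U, hU⟩ := exists_isGenericEigenbasis_of_connected hG
  obtain ⟨f, l, m, hf, hbetween, hS⟩ :=
    exists_injective_and_forall_between (β := β) hU.injective hcard
  have hpos (k) : 0 < (d (f k) - l) * (m - d (f k)) :=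
    mul_pos (sub_pos.mpr (hbetween k).1) (sub_pos.mpr (hbetween k).2)
  have he : Function.Injective fun k => l + m - d (f k) :=
    sub_right_injective.comp (hU.injective.comp hf)
  obtain ⟨W, hW, hWH, hB⟩ := exists_inS_of_eventually_nhds_one H he
    (P := fun W => ∀ i k, (U * coupling d f l m * Wᵀ) i k ≠ 0) (by
      refine eventually_all.mpr fun i => eventually_all.mpr fun k => ?_
      have hcont : Continuous fun W : Matrix β β ℝ => (U * coupling d f l m * Wᵀ) i k :=
        (continuous_const.matrix_mul continuous_id.matrix_transpose).matrix_elem i k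
      refine hcont.continuousAt.eventually_ne ?_
      rw [transpose_one, Matrix.mul_one, mul_coupling_apply]
      exact mul_ne_zero (hU.apply_ne_zero _ _) (Real.sqrt_pos.mpr (hpos k)).ne')
  have hQ : (fromBlocks U 0 0 W)ᵀ * fromBlocks U 0 0 W = 1 := by
    simp [fromBlocks_transpose, fromBlocks_multiply, hU.transpose_mul_self, hW]
  have hjoin := inS_fromBlocks_graphJoin hU.inS_conj hB hWH
  rw [← fromBlocks_conj_coupledMatrix] at hjoin
  calc
    qGraph (graphJoin G H) ≤ qMat (coupledMatrix d f l m) :=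
      Nat.sInf_le ⟨_, hjoin, qMat_conj hQ _⟩
    _ ≤ ({l, m} ∪ (Finset.univ.image f)ᶜ.image d).card := by
      refine qMat_le_card fun x z hz heigen => ?_
      have hx := eq_of_coupledMatrix_mulVec_eq_smul hf (fun k => (hpos k).le) hz heigen
      simpa [eq_comm, or_assoc] using hx
    _ ≤ _ := hS

end Join

theorem statement15_general {α β : Type*} [Fintype α] [DecidableEq α] [Fintype β] [DecidableEq β]
    (G : SimpleGraph α) (H : SimpleGraph β)
    (hGH : Fintype.card β ≤ Fintype.card α ∧ G.Connected ∨
      Fintype.card α ≤ Fintype.card β ∧ H.Connected) :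
    qGraph (graphJoin G H) ≤ max 2 (Nat.dist (Fintype.card α) (Fintype.card β)) := by
  obtain ⟨hcard, hG⟩ | ⟨hcard, hH⟩ := hGH
  · rw [Nat.dist_eq_sub_of_le_right hcard]
    exact qGraph_graphJoin_le hG H hcard
  · rw [qGraph_graphJoin_comm, Nat.dist_eq_sub_of_le hcard]
    exact qGraph_graphJoin_le hH G hcard

/-- Corollary 3.9, second part: for connected graphs `G` and `H`,
`q(G ∨ H) ≤ max {2, ||G| − |H||}`. -/
theorem statement15 (g h : ℕ) (G : SimpleGraph (Fin g)) (H : SimpleGraph (Fin h))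
    (hG : G.Connected) (hH : H.Connected) :
    qGraph (graphJoin G H) ≤ max 2 (Nat.dist g h) := by
  simpa using statement15_general G H ((le_total h g).imp (by simpa using ⟨·, hG⟩)
    (by simpa using ⟨·, hH⟩))
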